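/- The k-linear map ρ : T_rt → T_rt ⊗ T_rt defined on a rooted tree T by ρ(T) = Σ_{e ∈ E(T)} T_e^1 ⊗ T_e^2 is a (left) pre-Lie comultiplication on T_rt. -/

import Mathlib

/-!
Statement 1: the map `ρ(T) = Σ_{e ∈ E(T)} T_e^1 ⊗ T_e^2` is a (left) pre-Lie
comultiplication on the free `k`-module `T_rt` with basis the isomorphism classes of
rooted trees.
-/

open TensorProduct

noncomputable section

section PreLie

variable (k : Type*) [CommRing k] (g : Type*) [AddCommGroup g] [Module k g]

/-- `τ_{(12)}` on the triple tensor product `g ⊗ (g ⊗ g)`: `x⊗y⊗z ↦ y⊗x⊗z`. -/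
def tau12 : g ⊗[k] (g ⊗[k] g) →ₗ[k] g ⊗[k] (g ⊗[k] g) :=
  (TensorProduct.assoc k g g g).toLinearMap ∘ₗ
    (LinearMap.rTensor g (TensorProduct.comm k g g).toLinearMap) ∘ₗ
    (TensorProduct.assoc k g g g).symm.toLinearMap

variable {k g}

/-- `δ₀ : g → g ⊗ g` is a (left) pre-Lie comultiplication if
`(Id − τ_{(12)}) ∘ (δ₀ ⊗ Id − Id ⊗ δ₀) ∘ δ₀ = 0`. -/
def IsPreLieComul (δ : g →ₗ[k] g ⊗[k] g) : Prop :=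
  (LinearMap.id - tau12 k g) ∘ₗ
      (((TensorProduct.assoc k g g g).toLinearMap ∘ₗ LinearMap.rTensor g δ)
        - LinearMap.lTensor g δ) ∘ₗ δ = 0

end PreLie

/-- The sum of a list of elements of an additive commutative monoid. -/
def lsum {M : Type*} [AddCommMonoid M] (l : List M) : M := l.foldr (· + ·) 0

/-- Planar rooted trees (a rooted tree together with an ordering of the children of each
vertex; these orderings are forgotten upon passing to the quotient `RTree` below). -/
inductive PTree : Type
  | node : List PTree → PTree

mutual
/-- All one-edge cuts of a rooted tree: for each edge `e` of `T`, the pair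
`(T_e^1, T_e^2)` obtained by deleting `e`, where `T_e^2` is the component containing the
root of `T` (rooted at the root of `T`) and `T_e^1` is the other component (rooted at its
vertex which was incident to `e`). -/
def PTree.cuts : PTree → List (PTree × PTree)
  | .node l => (PTree.cutsL l).map (fun p => (p.1, .node p.2))
/-- Auxiliary to `PTree.cuts`: all cuts of a forest. -/
def PTree.cutsL : List PTree → List (PTree × List PTree)
  | [] => []
  | t :: ts =>
      ((t, ts) :: (PTree.cuts t).map (fun p => (p.1, p.2 :: ts)))
        ++ (PTree.cutsL ts).map (fun p => (p.1, t :: p.2))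
end

/-- Two planar rooted trees are equivalent iff they are isomorphic as rooted trees,
i.e. one is obtained from the other by permuting the children of each vertex. -/
inductive PTree.Equiv : PTree → PTree → Prop
  | node {l l₂ l' : List PTree} : List.Forall₂ PTree.Equiv l l₂ → l₂.Perm l' →
      PTree.Equiv (.node l) (.node l')

/-- Isomorphism classes of rooted trees. -/
def RTree : Type := Quot PTree.Equiv

variable (k : Type*) [CommRing k]

/-- `T_rt`: the free `k`-module with basis the isomorphism classes of rooted trees. -/
abbrev Trt := RTree →₀ k

/-- The pre-Lie comultiplication `ρ(T) = Σ_{e ∈ E(T)} T_e^1 ⊗ T_e^2` of Connes-Kreimer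
(defined on an isomorphism class via a representative; the result does not depend on this
choice). -/
def rho : Trt k →ₗ[k] Trt k ⊗[k] Trt k :=
  Finsupp.lift (Trt k ⊗[k] Trt k) k RTree fun q =>
    lsum ((PTree.cuts q.out).map fun p =>
      (Finsupp.single (Quot.mk PTree.Equiv p.1) (1 : k)) ⊗ₜ[k]
        (Finsupp.single (Quot.mk PTree.Equiv p.2) (1 : k)))

namespace PTree

/-- The isomorphism class of a planar rooted tree. -/
def cls (t : PTree) : RTree := Quot.mk PTree.Equiv t

/-- The multiset of isomorphism classes of the trees of a planar forest. -/
def forestCls (l : List PTree) : Multiset RTree := (l.map cls : List RTree)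

theorem Equiv.refl (t : PTree) : PTree.Equiv t t := by
  refine PTree.rec (motive_1 := fun t => PTree.Equiv t t)
    (motive_2 := fun l => List.Forall₂ PTree.Equiv l l) ?_ ?_ ?_ t
  · exact fun l h => .node h (List.Perm.refl l)
  · exact .nil
  · exact fun _ _ h hs => .cons h hs

theorem forall₂_equiv_refl (l : List PTree) : List.Forall₂ PTree.Equiv l l :=
  List.forall₂_same.2 fun t _ => Equiv.refl t

theorem cls_node_of_perm {l l' : List PTree} (h : l.Perm l') : cls (node l) = cls (node l') :=
  Quot.sound (.node (forall₂_equiv_refl l) h)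

theorem cls_node_append_cons {t t' : PTree} (h : cls t = cls t') (l₁ l₂ : List PTree) :
    cls (node (l₁ ++ t :: l₂)) = cls (node (l₁ ++ t' :: l₂)) := by
  let f : RTree → RTree := Quot.lift (fun s => cls (node (l₁ ++ s :: l₂))) fun a b hab =>
    Quot.sound (.node (List.rel_append (forall₂_equiv_refl l₁) (.cons hab (forall₂_equiv_refl l₂)))
      (List.Perm.refl _))
  exact congrArg f h

theorem cls_node_append_of_map_eq {l l' : List PTree} (h : l.map cls = l'.map cls)
    (l₁ : List PTree) : cls (node (l₁ ++ l)) = cls (node (l₁ ++ l')) := by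
  induction l generalizing l' l₁ with
  | nil =>
    obtain rfl : l' = [] := by simpa using h.symm
    rfl
  | cons t l ih =>
    cases l' with
    | nil => simp at h
    | cons t' l' =>
      simp only [List.map_cons, List.cons.injEq] at h
      rw [cls_node_append_cons h.1]
      simpa using ih h.2 (l₁ ++ [t'])

/-- A planar representative of a rooted tree. -/
def planarRep (q : RTree) : PTree := Quot.out q

theorem cls_planarRep (q : RTree) : cls (planarRep q) = q := Quot.out_eq q

/-- The rooted tree whose root has the given multiset of branches. -/
def graft (m : Multiset RTree) : RTree := cls (node (m.toList.map planarRep))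

theorem graft_forestCls (l : List PTree) : graft (forestCls l) = cls (node l) := by
  have h : List.Perm ((forestCls l).toList) (l.map cls) :=
    Multiset.coe_eq_coe.1 (Multiset.coe_toList _)
  rw [graft, cls_node_of_perm (h.map planarRep)]
  refine cls_node_append_of_map_eq (l₁ := []) ?_
  rw [List.map_map, List.map_map]
  exact List.map_congr_left fun t _ => cls_planarRep (cls t)

/-- The multiset of one-edge cuts of a tree, up to isomorphism. -/
def cutsCls (t : PTree) : Multiset (RTree × RTree) :=
  ((cuts t).map fun p => (cls p.1, cls p.2) : List _)

/-- The multiset of one-edge cuts of a forest, up to isomorphism. -/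
def cutsLCls (l : List PTree) : Multiset (RTree × Multiset RTree) :=
  ((cutsL l).map fun p => (cls p.1, forestCls p.2) : List _)

theorem forestCls_cons (t : PTree) (l : List PTree) :
    forestCls (t :: l) = cls t ::ₘ forestCls l := rfl

theorem forestCls_perm {l l' : List PTree} (h : l.Perm l') : forestCls l = forestCls l' :=
  Multiset.coe_eq_coe.2 (h.map cls)

theorem cutsCls_node (l : List PTree) :
    cutsCls (node l) = (cutsLCls l).map fun p => (p.1, graft p.2) := by
  simp [cutsCls, cutsLCls, cuts, graft_forestCls, Function.comp_def]

theorem cutsLCls_cons (t : PTree) (l : List PTree) :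
    cutsLCls (t :: l) = (cls t, forestCls l) ::ₘ
      ((cutsCls t).map (fun p => (p.1, p.2 ::ₘ forestCls l)) +
        (cutsLCls l).map (fun p => (p.1, cls t ::ₘ p.2))) := by
  simp [cutsCls, cutsLCls, cutsL, forestCls_cons, Function.comp_def]

theorem cutsLCls_perm {l l' : List PTree} (h : l.Perm l') : cutsLCls l = cutsLCls l' := by
  induction h with
  | nil => rfl
  | cons t h ih => rw [cutsLCls_cons, cutsLCls_cons, ih, forestCls_perm h]
  | swap t s l =>
    simp only [cutsLCls_cons, forestCls_cons, Multiset.map_cons, Multiset.map_add,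
      Multiset.map_map, Function.comp_def, Multiset.cons_swap (cls t) (cls s)]
    simp only [Multiset.cons_swap _ (cls t) (forestCls l),
      Multiset.cons_swap _ (cls s) (forestCls l)]
    simp only [← Multiset.singleton_add]
    abel
  | trans _ _ ih₁ ih₂ => exact ih₁.trans ih₂

theorem cutsCls_eq_of_equiv (t : PTree) : ∀ t', PTree.Equiv t t' → cutsCls t = cutsCls t' := by
  refine PTree.rec (motive_1 := fun t => ∀ t', PTree.Equiv t t' → cutsCls t = cutsCls t')
    (motive_2 := fun l => ∀ l', List.Forall₂ PTree.Equiv l l' →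
      forestCls l = forestCls l' ∧ cutsLCls l = cutsLCls l') ?_ ?_ ?_ t
  · rintro l ih _ ⟨h, hp⟩
    rw [cutsCls_node, cutsCls_node, (ih _ h).2, cutsLCls_perm hp]
  · rintro _ ⟨⟩
    exact ⟨rfl, rfl⟩
  · rintro t l iht ihl _ (_ | ⟨h, hs⟩)
    have ht : cls t = cls _ := Quot.sound h
    obtain ⟨h₁, h₂⟩ := ihl _ hs
    rw [forestCls_cons, forestCls_cons, cutsLCls_cons, cutsLCls_cons, ht, h₁, h₂, iht _ h]
    exact ⟨rfl, rfl⟩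

theorem cutsCls_eq_of_cls_eq {t t' : PTree} (h : cls t = cls t') : cutsCls t = cutsCls t' :=
  congrArg (Quot.lift cutsCls cutsCls_eq_of_equiv) h

section Coassociator

variable {M : Type*} [AddCommGroup M]

theorem sum_map_sum_map_comm {α β : Type*} (l : List α) (m : List β) (f : α → β → M) :
    (l.map fun a => (m.map fun b => f a b).sum).sum =
      (m.map fun b => (l.map fun a => f a b).sum).sum := by
  simpa using Multiset.sum_map_sum_map (l : Multiset α) (m : Multiset β) (f := f)

/-- The sum of `f` over the pairs of cuts of a tree, the second one cutting the trunk, minus the sum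
over those where the second one cuts the branch. -/
def coassociator (t : PTree) (f : PTree → PTree → PTree → M) : M :=
  ((cuts t).map fun p => ((cuts p.2).map fun q => f p.1 q.1 q.2).sum).sum -
    ((cuts t).map fun p => ((cuts p.1).map fun q => f q.1 q.2 p.2).sum).sum

/-- The analogue of `PTree.coassociator` for forests. -/
def coassociatorL (l : List PTree) (f : PTree → PTree → List PTree → M) : M :=
  ((cutsL l).map fun p => ((cutsL p.2).map fun q => f p.1 q.1 q.2).sum).sum -
    ((cutsL l).map fun p => ((cuts p.1).map fun q => f q.1 q.2 p.2).sum).sum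

theorem coassociator_node (l : List PTree) (f : PTree → PTree → PTree → M) :
    coassociator (node l) f = coassociatorL l fun a b c => f a b (node c) := by
  simp [coassociator, coassociatorL, cuts, Function.comp_def]

theorem coassociatorL_cons (t : PTree) (l : List PTree) (f : PTree → PTree → List PTree → M) :
    coassociatorL (t :: l) f =
      ((cutsL l).map fun p => f t p.1 p.2).sum + ((cutsL l).map fun p => f p.1 t p.2).sum +
      (((cuts t).map fun p => ((cutsL l).map fun q => f p.1 q.1 (p.2 :: q.2)).sum).sum +
        ((cuts t).map fun p => ((cutsL l).map fun q => f q.1 p.1 (p.2 :: q.2)).sum).sum) +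
      coassociator t (fun a b c => f a b (c :: l)) +
      coassociatorL l (fun a b c => f a b (t :: c)) := by
  rw [sum_map_sum_map_comm (cuts t) (cutsL l) fun p q => f q.1 p.1 (p.2 :: q.2)]
  simp only [coassociatorL, coassociator, cutsL, List.map_append, List.map_cons, List.map_map,
    List.sum_append, List.sum_cons, Function.comp_def, List.sum_map_add]
  abel

theorem coassociator_symm (t : PTree) : ∀ f : PTree → PTree → PTree → M,
    coassociator t f = coassociator t fun a b c => f b a c := by
  refine PTree.rec
    (motive_1 := fun t => ∀ f : PTree → PTree → PTree → M,
      coassociator t f = coassociator t fun a b c => f b a c)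
    (motive_2 := fun l => ∀ f : PTree → PTree → List PTree → M,
      coassociatorL l f = coassociatorL l fun a b c => f b a c) ?_ ?_ ?_ t
  · intro l ih f
    rw [coassociator_node, coassociator_node, ih]
  · intro f
    simp [coassociatorL, cutsL]
  · intro t l iht ihl f
    rw [coassociatorL_cons, coassociatorL_cons, iht, ihl]
    abel

end Coassociator

end PTree

theorem lsum_eq_sum {M : Type*} [AddCommMonoid M] (l : List M) : lsum l = l.sum := by
  induction l with
  | nil => rfl
  | cons a l ih => rw [List.sum_cons, ← ih]; rfl

/-- The basis element of `Trt k` attached to a planar rooted tree. -/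
def PTree.basisElt (t : PTree) : Trt k := Finsupp.single (PTree.cls t) 1

theorem rho_basisElt (t : PTree) :
    rho k (t.basisElt k) =
      (t.cuts.map fun p => p.1.basisElt k ⊗ₜ[k] p.2.basisElt k).sum := by
  have h := PTree.cutsCls_eq_of_cls_eq (Quot.out_eq (PTree.cls t))
  have h' := congrArg (fun s => (s.map fun p : RTree × RTree =>
    (Finsupp.single p.1 (1 : k)) ⊗ₜ[k] (Finsupp.single p.2 (1 : k))).sum) h
  simp only [PTree.cutsCls, Multiset.map_coe, Multiset.sum_coe, List.map_map,
    Function.comp_def] at h'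
  rw [rho, PTree.basisElt, Finsupp.lift_apply, Finsupp.sum_single_index (by simp), one_smul,
    lsum_eq_sum]
  exact h'

section PreLieDefect

variable {k} {g : Type*} [AddCommGroup g] [Module k g]

theorem tau12_tmul (x y z : g) : tau12 k g (x ⊗ₜ (y ⊗ₜ z)) = y ⊗ₜ (x ⊗ₜ z) := by
  simp [tau12]

/-- The map `(Id ⊗ δ - δ ⊗ Id) ∘ δ`. -/
def coassocDefect (δ : g →ₗ[k] g ⊗[k] g) : g →ₗ[k] g ⊗[k] (g ⊗[k] g) :=
  (LinearMap.lTensor g δ -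
    (TensorProduct.assoc k g g g).toLinearMap ∘ₗ LinearMap.rTensor g δ) ∘ₗ δ

theorem isPreLieComul_of_tau12_coassocDefect (δ : g →ₗ[k] g ⊗[k] g)
    (h : tau12 k g ∘ₗ coassocDefect δ = coassocDefect δ) : IsPreLieComul δ := by
  rw [IsPreLieComul, ← neg_sub (LinearMap.lTensor g δ), LinearMap.neg_comp, ← coassocDefect,
    LinearMap.comp_neg, LinearMap.sub_comp, h, LinearMap.id_comp, sub_self, neg_zero]

theorem coassocDefect_of_cuts (δ : g →ₗ[k] g ⊗[k] g) (v : PTree → g)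
    (hδ : ∀ t, δ (v t) = (t.cuts.map fun p => v p.1 ⊗ₜ[k] v p.2).sum) (t : PTree) :
    coassocDefect δ (v t) = t.coassociator fun a b c => v a ⊗ₜ[k] (v b ⊗ₜ[k] v c) := by
  have h₁ (x : g) (l : List (g ⊗[k] g)) : x ⊗ₜ[k] l.sum = (l.map fun y => x ⊗ₜ[k] y).sum :=
    map_list_sum (TensorProduct.mk k _ _ x) l
  have h₂ (x : g) (l : List (g ⊗[k] g)) : l.sum ⊗ₜ[k] x = (l.map fun y => y ⊗ₜ[k] x).sum :=
    map_list_sum ((TensorProduct.mk k _ _).flip x) l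
  rw [coassocDefect, LinearMap.comp_apply, LinearMap.sub_apply]
  simp only [PTree.coassociator, LinearMap.comp_apply, LinearEquiv.coe_coe, map_list_sum, List.map_map,
    Function.comp_def, LinearMap.rTensor_tmul, LinearMap.lTensor_tmul, hδ, h₁, h₂, TensorProduct.assoc_tmul]

theorem tau12_coassocDefect_of_cuts (δ : g →ₗ[k] g ⊗[k] g) (v : PTree → g)
    (hδ : ∀ t, δ (v t) = (t.cuts.map fun p => v p.1 ⊗ₜ[k] v p.2).sum) (t : PTree) :
    tau12 k g (coassocDefect δ (v t)) = coassocDefect δ (v t) := by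
  rw [coassocDefect_of_cuts δ v hδ]
  conv_lhs => rw [PTree.coassociator_symm]
  simp only [PTree.coassociator, map_sub, map_list_sum, List.map_map, Function.comp_def,
    tau12_tmul]

end PreLieDefect

/-- `ρ` is a (left) pre-Lie comultiplication on `T_rt`. -/
theorem rho_isPreLieComul : IsPreLieComul (rho k) := by
  refine isPreLieComul_of_tau12_coassocDefect _ (Finsupp.lhom_ext' fun q => LinearMap.ext_ring ?_)
  obtain ⟨t, rfl⟩ := Quot.exists_rep q
  exact tau12_coassocDefect_of_cuts (rho k) (PTree.basisElt k) (rho_basisElt k) t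

end
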